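/- Among all trees on n ≥ 3 vertices, the path P_n uniquely minimizes the Albertson index; that is, for every tree T on n vertices, irr(T) ≥ 2 = irr(P_n), with equality if and only if T is isomorphic to P_n. -/

import Mathlib

open SimpleGraph Finset

noncomputable instance decAdjInst {V : Type*} (G : SimpleGraph V) : DecidableRel G.Adj :=
  Classical.decRel _

/-- Albertson irregularity index: `∑_{uv ∈ E(G)} |deg u - deg v|`. -/
noncomputable def irr {V : Type*} [Fintype V] (G : SimpleGraph V) : ℕ := by
  classical
  exact ∑ e ∈ G.edgeFinset,
    Sym2.lift ⟨fun u v => ((G.degree u : ℤ) - (G.degree v : ℤ)).natAbs,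
      fun u v => by dsimp only; rw [← Int.natAbs_neg, neg_sub]⟩ e

/-- Sigma index: `∑_{uv ∈ E(G)} (deg u - deg v)^2`. -/
noncomputable def sigmaIdx {V : Type*} [Fintype V] (G : SimpleGraph V) : ℕ := by
  classical
  exact ∑ e ∈ G.edgeFinset,
    Sym2.lift ⟨fun u v => ((G.degree u : ℤ) - (G.degree v : ℤ)).natAbs ^ 2,
      fun u v => by dsimp only; rw [← Int.natAbs_neg, neg_sub]⟩ e

lemma both_leaf_card {V : Type*} [Fintype V] (T : SimpleGraph V) (hT : T.IsTree)
    (h3 : 3 ≤ Fintype.card V) {a b : V} (hab : T.Adj a b) (ha : T.degree a = 1)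
    (hb : T.degree b = 1) : False := by
  classical
  rw [degree_eq_one_iff_existsUnique_adj] at ha hb
  have key : ∀ x y, T.Walk x y → (x = a ∨ x = b) → (y = a ∨ y = b) := by
    intro x y p
    induction p with
    | nil => exact id
    | cons h p ih =>
      intro hx
      apply ih
      rcases hx with rfl | rfl
      · right; exact ha.unique h hab
      · left; exact hb.unique h hab.symm
  have : (Finset.univ : Finset V) ⊆ {a, b} := by
    intro y _
    obtain ⟨p⟩ := hT.connected.preconnected a y
    simpa using key a y p (Or.inl rfl)
  have := Finset.card_le_card this
  have h2 := Finset.card_le_two (a := a) (b := b)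
  rw [Finset.card_univ] at this
  omega

lemma irr_eq {V : Type*} [Fintype V] [DecidableEq V] (G : SimpleGraph V) :
    irr G = ∑ e ∈ G.edgeFinset,
    Sym2.lift ⟨fun u v => ((G.degree u : ℤ) - (G.degree v : ℤ)).natAbs,
      fun u v => by dsimp only; rw [← Int.natAbs_neg, neg_sub]⟩ e := by
  unfold irr
  congr!

lemma leaf_count {V : Type*} [Fintype V] [DecidableEq V] (G : SimpleGraph V) :
    ∑ e ∈ G.edgeFinset, #{v : V | G.degree v = 1 ∧ v ∈ e} = #{v : V | G.degree v = 1} := by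
  simp_rw [Finset.card_filter]
  rw [Finset.sum_comm]
  apply Finset.sum_congr rfl
  intro v _
  split_ifs with h
  · simp only [h, true_and]
    rw [← Finset.card_filter, ← G.incidenceFinset_eq_filter, G.card_incidenceFinset_eq_degree, h]
  · simp [h]

lemma leaf_edge {V : Type*} [Fintype V] [DecidableEq V] (G : SimpleGraph V) {a b : V}
    (h : a ≠ b) : #{v : V | G.degree v = 1 ∧ v ∈ s(a, b)} =
      (if G.degree a = 1 then 1 else 0) + (if G.degree b = 1 then 1 else 0) := by
  have : ({v : V | G.degree v = 1 ∧ v ∈ s(a, b)} : Finset V) =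
      Finset.filter (fun v => G.degree v = 1) {a, b} := by
    ext v; simp [and_comm]
  rw [this, Finset.card_filter, Finset.sum_pair h]

lemma leaf_le_irr {V : Type*} [Fintype V] [DecidableEq V] (T : SimpleGraph V) (hT : T.IsTree)
    (h3 : 3 ≤ Fintype.card V) : #{v : V | T.degree v = 1} ≤ irr T := by
  rw [irr_eq, ← leaf_count]
  apply Finset.sum_le_sum
  intro e
  induction e with | _ a b
  intro he
  rw [mem_edgeFinset, mem_edgeSet] at he
  rw [leaf_edge T he.ne, Sym2.lift_mk]
  have h0 := both_leaf_card T hT h3 he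
  have ha : 0 < T.degree a := (T.degree_pos_iff_exists_adj a).2 ⟨b, he⟩
  have hb : 0 < T.degree b := (T.degree_pos_iff_exists_adj b).2 ⟨a, he.symm⟩
  dsimp only
  split_ifs with h1 h2 h2
  · exact (h0 h1 h2).elim
  all_goals omega

lemma irr_le_leaf {V : Type*} [Fintype V] [DecidableEq V] (T : SimpleGraph V)
    (hd : ∀ v, T.degree v ≤ 2) : irr T ≤ #{v : V | T.degree v = 1} := by
  rw [irr_eq, ← leaf_count]
  apply Finset.sum_le_sum
  intro e
  induction e with | _ a b
  intro he
  rw [mem_edgeFinset, mem_edgeSet] at he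
  rw [leaf_edge T he.ne, Sym2.lift_mk]
  have ha : 0 < T.degree a := (T.degree_pos_iff_exists_adj a).2 ⟨b, he⟩
  have hb : 0 < T.degree b := (T.degree_pos_iff_exists_adj b).2 ⟨a, he.symm⟩
  have := hd a
  have := hd b
  dsimp only
  split_ifs with h1 h2 h2 <;> omega

lemma leaf_sum {V : Type*} [Fintype V] [DecidableEq V] (T : SimpleGraph V) (hT : T.IsTree)
    (h3 : 3 ≤ Fintype.card V) :
    #{v : V | T.degree v = 1} = 2 + ∑ v, (T.degree v - 2) := by
  have h1 := T.sum_degrees_eq_twice_card_edges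
  have h2 := hT.card_edgeFinset
  have : Nontrivial V := Fintype.one_lt_card_iff_nontrivial.1 (by omega)
  have h4 : ∑ v, (T.degree v + if T.degree v = 1 then 1 else 0) = ∑ v, ((T.degree v - 2) + 2) := by
    apply Finset.sum_congr rfl
    intro v _
    have := hT.connected.preconnected.degree_pos_of_nontrivial v
    split_ifs <;> omega
  rw [Finset.sum_add_distrib, Finset.sum_add_distrib, ← Finset.card_filter] at h4
  simp only [Finset.sum_const, Finset.card_univ, smul_eq_mul] at h4
  omega

lemma exists_parent {V : Type*} (T : SimpleGraph V) (hT : T.IsTree) (u y : V) (k : ℕ)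
    (h : T.dist u y = k + 1) : ∃ z, T.Adj y z ∧ T.dist u z = k := by
  obtain ⟨p, hp⟩ := (hT.connected.preconnected y u).exists_walk_length_eq_dist
  rw [dist_comm, h] at hp
  cases p with
  | nil => simp at hp
  | cons hadj q =>
    rename_i z
    refine ⟨z, hadj, ?_⟩
    have h1 := dist_le q
    have h2 := hT.dist_eq_dist_add_one_of_adj u hadj
    rw [dist_comm] at h1
    simp at hp
    omega

lemma dist_inj {V : Type*} [Fintype V] (T : SimpleGraph V) (hT : T.IsTree)
    (hd : ∀ v, T.degree v ≤ 2) (u : V) (hu : T.degree u = 1) (k : ℕ) :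
    ∀ x y, T.dist u x = k → T.dist u y = k → x = y := by
  classical
  induction k with
  | zero =>
    intro x y hx hy
    rw [← (hT.connected.dist_eq_zero_iff).1 hx, (hT.connected.dist_eq_zero_iff).1 hy]
  | succ k ih =>
    intro x y hx hy
    obtain ⟨z, hxz, hz⟩ := exists_parent T hT u x k hx
    obtain ⟨z', hyz, hz'⟩ := exists_parent T hT u y k hy
    obtain rfl := ih z z' hz hz'
    by_contra hne
    cases k with
    | zero =>
      obtain rfl := (hT.connected.dist_eq_zero_iff).1 hz
      rw [degree_eq_one_iff_existsUnique_adj] at hu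
      exact hne (hu.unique hxz.symm hyz.symm)
    | succ k =>
      obtain ⟨w, hzw, hw⟩ := exists_parent T hT u z k hz
      have hs : ({x, y, w} : Finset V) ⊆ T.neighborFinset z := by
        intro t ht
        simp only [Finset.mem_insert, Finset.mem_singleton] at ht
        rw [mem_neighborFinset]
        rcases ht with rfl | rfl | rfl
        exacts [hxz.symm, hyz.symm, hzw]
      have hc := Finset.card_le_card hs
      have hxw : x ≠ w := by rintro rfl; omega
      have hyw : y ≠ w := by rintro rfl; omega
      rw [Finset.card_eq_three.2 ⟨x, y, w, hne, hxw, hyw, rfl⟩, card_neighborFinset_eq_degree] at hc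
      have := hd z
      omega

lemma iso_of_deg {V : Type*} [Fintype V] (T : SimpleGraph V) (hT : T.IsTree)
    (hd : ∀ v, T.degree v ≤ 2) (u : V) (hu : T.degree u = 1) :
    Nonempty (T ≃g pathGraph (Fintype.card V)) := by
  have hlt : ∀ v, T.dist u v < Fintype.card V := by
    intro v
    obtain ⟨p, hp, hl⟩ := hT.connected.exists_path_of_dist u v
    rw [← hl]
    exact hp.length_lt
  let f : V → Fin (Fintype.card V) := fun v => ⟨T.dist u v, hlt v⟩
  have hinj : ∀ x y, T.dist u x = T.dist u y → x = y := fun x y h =>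
    dist_inj T hT hd u hu _ x y h rfl
  have hf : Function.Bijective f := by
    rw [Fintype.bijective_iff_injective_and_card]
    exact ⟨fun x y h => hinj x y (by simpa [f] using h), by simp⟩
  refine ⟨⟨Equiv.ofBijective f hf, ?_⟩⟩
  intro a b
  rw [pathGraph_adj]
  change T.dist u a + 1 = T.dist u b ∨ T.dist u b + 1 = T.dist u a ↔ T.Adj a b
  constructor
  · rintro (h | h)
    · obtain ⟨z, hz, hz'⟩ := exists_parent T hT u b _ h.symm
      rw [← hinj _ _ hz']; exact hz.symm
    · obtain ⟨z, hz, hz'⟩ := exists_parent T hT u a _ h.symm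
      rw [← hinj _ _ hz']; exact hz
  · intro h
    have := hT.dist_eq_dist_add_one_of_adj u h
    omega

lemma deg_of_iso {V : Type*} [Fintype V] (T : SimpleGraph V) (n : ℕ)
    (φ : T ≃g pathGraph n) (v : V) : T.degree v ≤ 2 := by
  classical
  rw [← card_neighborFinset_eq_degree]
  have hi : Set.InjOn (fun w => (φ w : ℕ)) (T.neighborFinset v : Set V) := by
    intro a _ b _ h
    exact φ.injective (Fin.ext h)
  rw [← Finset.card_image_of_injOn hi]
  have : (T.neighborFinset v).image (fun w => (φ w : ℕ)) ⊆ {(φ v : ℕ) - 1, (φ v : ℕ) + 1} := by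
    intro k hk
    obtain ⟨w, hw, rfl⟩ := Finset.mem_image.1 hk
    rw [mem_neighborFinset, ← φ.map_adj_iff, pathGraph_adj] at hw
    simp only [Finset.mem_insert, Finset.mem_singleton]
    omega
  exact (Finset.card_le_card this).trans Finset.card_le_two

/-- Among trees of order `n ≥ 3`, the path uniquely minimizes the Albertson index:
`irr(T) ≥ 2`, with equality iff `T ≅ P_n`. -/
theorem path_unique_min_irr {V : Type*} [Fintype V] (T : SimpleGraph V) (hT : T.IsTree)
    (n : ℕ) (hn : Fintype.card V = n) (h3 : 3 ≤ n) :
    2 ≤ irr T ∧ (irr T = 2 ↔ Nonempty (T ≃g pathGraph n)) := by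
  classical
  subst hn
  have h1 := leaf_le_irr T hT h3
  have h2 := leaf_sum T hT h3
  refine ⟨by omega, ?_, ?_⟩
  · intro h
    have h0 : ∑ v, (T.degree v - 2) = 0 := by omega
    have hd : ∀ v, T.degree v ≤ 2 := by
      intro v
      have := (Finset.sum_eq_zero_iff.1 h0) v (Finset.mem_univ v)
      omega
    have hpos : 0 < #{v : V | T.degree v = 1} := by omega
    obtain ⟨u, hu⟩ := Finset.card_pos.1 hpos
    exact iso_of_deg T hT hd u (Finset.mem_filter.1 hu).2
  · rintro ⟨φ⟩
    have hd := deg_of_iso T _ φ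
    have h4 := irr_le_leaf T hd
    have h0 : ∑ v, (T.degree v - 2) = 0 :=
      Finset.sum_eq_zero fun v _ => by have := hd v; omega
    omega
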